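/- Let (X,d) be a complete b-rectangular metric space with coefficient s ≥ 1, T : X → X a mapping, and φ : X → [0,∞) a lower semicontinuous function. Suppose ψ is an altering distance function, ϕ ∈ Φ_u, and F is a C-class function, and that for all x, y ∈ X, ψ(s²d(Tx,Ty) + φ(Tx) + φ(Ty)) ≤ F(ψ(M(x,y)), ϕ(M(x,y))), where M(x,y) = max{d(x,y)+φ(x)+φ(y), d(x,Tx)+φ(x)+φ(Tx), d(y,Ty)+φ(y)+φ(Ty)}. Then T has a unique fixed point z ∈ X, and moreover φ(z) = 0. -/

import Mathlib

/-!
Write `x n = T^[n] x₀` and `a n = d (x n) (x (n+1)) + φ (x n) + φ (x (n+1))`. Two consequences of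
the contraction condition carry the whole argument.

* Pointwise (`contr_lt`): if `M(x,y) > 0` then `s² d(Tx,Ty) + φ(Tx) + φ(Ty) < M(x,y)`.
* In the limit (`limit_eq_zero`): if `u k` and `M k` tend to the same `L ≥ 0` and
  `ψ (u k) ≤ F (ψ (M k)) (ϕ (M k))`, then `L = 0`.

The first makes `a` antitone, so the second gives `a → 0`; in particular `φ (x n) → 0`. If some
`a n` vanishes, `x n` is the fixed point. Otherwise `a` is strictly decreasing, so the orbit is
injective and the rectangular inequality may be used freely along it. The same scheme gives
`d (x n) (x (n+2)) → 0`, which the rectangular inequality alone does not yield.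

If the orbit were not Cauchy, there would be `ε > 0` and arbitrarily late indices with
`d (x (j+2)) (x (i+1)) ≥ ε` and `d (x j) (x (i+1)) < ε`. The rectangle through `x j`, `x (i+1)`
bounds `M (x (j+1)) (x i)` by `s ε + o(1)`, while `contr_lt` bounds it below by `s² ε`; hence it
tends to `s² ε`, and `limit_eq_zero` gives `s² ε = 0`, a contradiction.

At the limit `z`, lower semicontinuity gives `φ z = 0`, and `M (x n) z → d z (Tz) + φ (Tz)`; a
rectangle through `x n`, `x (n+1)` squeezes the left side of the contraction to the same limit,
which is therefore `0`.
-/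

open Filter Topology

/-- A b-rectangular metric space with coefficient `s`. -/
structure RectBMetric (X : Type*) (s : ℝ) where
  d : X → X → ℝ
  nonneg : ∀ x y, 0 ≤ d x y
  eq_iff : ∀ x y, d x y = 0 ↔ x = y
  symm : ∀ x y, d x y = d y x
  rect : ∀ x y u v : X, u ≠ v → u ≠ x → u ≠ y → v ≠ x → v ≠ y →
    d x y ≤ s * (d x u + d u v + d v y)

namespace RectBMetric

variable {X : Type*} {s : ℝ}

/-- Convergence of a sequence in a b-rectangular metric space. -/
def TendstoSeq (B : RectBMetric X s) (x : ℕ → X) (l : X) : Prop :=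
  Filter.Tendsto (fun n => B.d (x n) l) Filter.atTop (nhds 0)

/-- Cauchy sequences in a b-rectangular metric space. -/
def IsCauchySeq (B : RectBMetric X s) (x : ℕ → X) : Prop :=
  ∀ ε : ℝ, 0 < ε → ∃ N : ℕ, ∀ m ≥ N, ∀ n ≥ N, B.d (x m) (x n) < ε

/-- Completeness of a b-rectangular metric space. -/
def Complete (B : RectBMetric X s) : Prop :=
  ∀ x : ℕ → X, B.IsCauchySeq x → ∃ l, B.TendstoSeq x l

/-- Lower semicontinuity of `φ : X → ℝ` with respect to a b-rectangular metric. -/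
def LSC (B : RectBMetric X s) (φ : X → ℝ) : Prop :=
  ∀ (x : ℕ → X) (l : X), B.TendstoSeq x l →
    φ l ≤ Filter.liminf (fun n => φ (x n)) Filter.atTop

/-- The quantity `M(x,y,d,T,φ)`. -/
def Mfun (B : RectBMetric X s) (T : X → X) (φ : X → ℝ) (x y : X) : ℝ :=
  max (B.d x y + φ x + φ y)
    (max (B.d x (T x) + φ x + φ (T x)) (B.d y (T y) + φ y + φ (T y)))

end RectBMetric

/-- An altering distance function on `[0,∞)`. -/
def AlteringDistance (ψ : ℝ → ℝ) : Prop :=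
  ContinuousOn ψ (Set.Ici 0) ∧ MonotoneOn ψ (Set.Ici 0) ∧
    (∀ t ≥ (0:ℝ), 0 ≤ ψ t) ∧ (∀ t ≥ (0:ℝ), (ψ t = 0 ↔ t = 0))

/-- The class `Φᵤ`: continuous `ϕ : [0,∞) → [0,∞)` with `ϕ(t) > 0` for `t > 0`, `ϕ(0) ≥ 0`. -/
def PhiU (ϕ : ℝ → ℝ) : Prop :=
  ContinuousOn ϕ (Set.Ici 0) ∧ (∀ t : ℝ, 0 < t → 0 < ϕ t) ∧ 0 ≤ ϕ 0

/-- C-class functions. -/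
def CClass (F : ℝ → ℝ → ℝ) : Prop :=
  ContinuousOn (fun p : ℝ × ℝ => F p.1 p.2) (Set.Ici 0 ×ˢ Set.Ici 0) ∧
    (∀ a b : ℝ, 0 ≤ a → 0 ≤ b → F a b ≤ a) ∧
    (∀ a b : ℝ, 0 ≤ a → 0 ≤ b → F a b = a → a = 0 ∨ b = 0)

/-! ### The control functions -/

/-- A control inequality that persists along sequences with a common limit forces that limit to
be zero: passing to the limit gives `ψ L ≤ F (ψ L) (ϕ L) ≤ ψ L`. -/
lemma limit_eq_zero {ψ ϕ : ℝ → ℝ} {F : ℝ → ℝ → ℝ}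
    (hψ : AlteringDistance ψ) (hϕ : PhiU ϕ) (hF : CClass F) {u M : ℕ → ℝ} {L : ℝ}
    (hu0 : ∀ k, 0 ≤ u k) (hM0 : ∀ k, 0 ≤ M k) (hu : Tendsto u atTop (𝓝 L))
    (hM : Tendsto M atTop (𝓝 L)) (h : ∀ k, ψ (u k) ≤ F (ψ (M k)) (ϕ (M k))) : L = 0 := by
  have hL : 0 ≤ L := ge_of_tendsto' hu hu0
  have hϕ0 : ∀ t, 0 ≤ t → 0 ≤ ϕ t := fun t ht => by
    rcases ht.eq_or_lt with rfl | ht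
    · exact hϕ.2.2
    · exact (hϕ.2.1 t ht).le
  have hu' : Tendsto u atTop (𝓝[Set.Ici 0] L) :=
    tendsto_nhdsWithin_iff.2 ⟨hu, Eventually.of_forall hu0⟩
  have hM' : Tendsto M atTop (𝓝[Set.Ici 0] L) :=
    tendsto_nhdsWithin_iff.2 ⟨hM, Eventually.of_forall hM0⟩
  have h1 : Tendsto (fun k => ψ (u k)) atTop (𝓝 (ψ L)) := (hψ.1 L hL).tendsto.comp hu'
  have h2 : Tendsto (fun k => ψ (M k)) atTop (𝓝 (ψ L)) := (hψ.1 L hL).tendsto.comp hM'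
  have h3 : Tendsto (fun k => ϕ (M k)) atTop (𝓝 (ϕ L)) := (hϕ.1 L hL).tendsto.comp hM'
  have h4 : Tendsto (fun k => (ψ (M k), ϕ (M k))) atTop
      (𝓝[Set.Ici 0 ×ˢ Set.Ici 0] (ψ L, ϕ L)) :=
    tendsto_nhdsWithin_iff.2 ⟨h2.prodMk_nhds h3,
      Eventually.of_forall fun k => ⟨hψ.2.2.1 _ (hM0 k), hϕ0 _ (hM0 k)⟩⟩
  have h5 : Tendsto (fun k => F (ψ (M k)) (ϕ (M k))) atTop (𝓝 (F (ψ L) (ϕ L))) :=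
    (hF.1 (ψ L, ϕ L) ⟨hψ.2.2.1 _ hL, hϕ0 _ hL⟩).tendsto.comp h4
  have h6 : ψ L ≤ F (ψ L) (ϕ L) := le_of_tendsto_of_tendsto' h1 h5 h
  have h7 := hF.2.1 _ _ (hψ.2.2.1 _ hL) (hϕ0 _ hL)
  rcases hF.2.2 _ _ (hψ.2.2.1 _ hL) (hϕ0 _ hL) (le_antisymm h7 h6) with h8 | h8
  · exact (hψ.2.2.2 _ hL).1 h8
  · by_contra hne
    exact (hϕ.2.1 L (lt_of_le_of_ne hL (Ne.symm hne))).ne' h8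

/-- The case of constant sequences in `limit_eq_zero`, combined with monotonicity of `ψ`. -/
lemma lt_of_control {ψ ϕ : ℝ → ℝ} {F : ℝ → ℝ → ℝ}
    (hψ : AlteringDistance ψ) (hϕ : PhiU ϕ) (hF : CClass F) {u M : ℝ}
    (hM : 0 < M) (h : ψ u ≤ F (ψ M) (ϕ M)) : u < M := by
  by_contra! hle
  have h1 : ψ M ≤ ψ u := hψ.2.1 hM.le (hM.le.trans hle) hle
  exact hM.ne' (limit_eq_zero hψ hϕ hF (u := fun _ => M) (M := fun _ => M) (fun _ => hM.le)
    (fun _ => hM.le) tendsto_const_nhds tendsto_const_nhds fun _ => h1.trans h)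

namespace RectBMetric

variable {X : Type*} {s : ℝ}

/-! ### Pointwise consequences of the contraction -/

lemma self (B : RectBMetric X s) (x : X) : B.d x x = 0 := (B.eq_iff x x).2 rfl

lemma pos (B : RectBMetric X s) {x y : X} (h : x ≠ y) : 0 < B.d x y :=
  lt_of_le_of_ne (B.nonneg x y) fun h' => h ((B.eq_iff x y).1 h'.symm)

lemma Mfun_nonneg (B : RectBMetric X s) {T : X → X} {φ : X → ℝ} (hφ0 : ∀ x, 0 ≤ φ x) (x y : X) :
    0 ≤ B.Mfun T φ x y :=
  le_max_of_le_left (by have := B.nonneg x y; have := hφ0 x; have := hφ0 y; linarith)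

lemma le_sq_mul (hs : 1 ≤ s) (B : RectBMetric X s) (x y : X) : B.d x y ≤ s ^ 2 * B.d x y :=
  le_mul_of_one_le_left (B.nonneg x y) (one_le_pow₀ hs)

/-- The contraction hypothesis, bundled with the standing assumptions on the control functions. -/
structure Contr (B : RectBMetric X s) (T : X → X) (φ : X → ℝ) (ψ ϕ : ℝ → ℝ) (F : ℝ → ℝ → ℝ) :
    Prop where
  hs : 1 ≤ s
  hφ0 : ∀ x, 0 ≤ φ x
  hψ : AlteringDistance ψ
  hϕ : PhiU ϕ
  hF : CClass F
  contr : ∀ x y : X, ψ (s ^ 2 * B.d (T x) (T y) + φ (T x) + φ (T y)) ≤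
    F (ψ (B.Mfun T φ x y)) (ϕ (B.Mfun T φ x y))

variable {B : RectBMetric X s} {T : X → X} {φ : X → ℝ} {ψ ϕ : ℝ → ℝ} {F : ℝ → ℝ → ℝ}

lemma contr_lt (H : Contr B T φ ψ ϕ F) {x y : X} (hM : 0 < B.Mfun T φ x y) :
    s ^ 2 * B.d (T x) (T y) + φ (T x) + φ (T y) < B.Mfun T φ x y :=
  lt_of_control H.hψ H.hϕ H.hF hM (H.contr x y)

lemma lhs_nonneg (H : Contr B T φ ψ ϕ F) (x y : X) :
    0 ≤ s ^ 2 * B.d x y + φ x + φ y := by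
  have := B.nonneg x y; have := H.hφ0 x; have := H.hφ0 y
  positivity

lemma phi_fixed (H : Contr B T φ ψ ϕ F) {w : X} (hw : T w = w) : φ w = 0 := by
  by_contra hne
  have hpos : 0 < φ w := lt_of_le_of_ne (H.hφ0 w) (Ne.symm hne)
  have hM : B.Mfun T φ w w = φ w + φ w := by simp [Mfun, hw, B.self]
  have := contr_lt H (x := w) (y := w) (by rw [hM]; linarith)
  rw [hM, hw, B.self] at this
  linarith

lemma fixed_unique (H : Contr B T φ ψ ϕ F) {w z : X} (hw : T w = w) (hz : T z = z) : w = z := by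
  by_contra hne
  have hpos := B.pos hne
  have hM : B.Mfun T φ w z = B.d w z := by
    simp [Mfun, hw, hz, B.self, phi_fixed H hw, phi_fixed H hz, hpos.le]
  have := contr_lt H (x := w) (y := z) (by rw [hM]; exact hpos)
  rw [hM, hw, hz, phi_fixed H hw, phi_fixed H hz] at this
  linarith [le_sq_mul H.hs B w z]

/-- The `φ`-perturbed step length `d x (Tx) + φ x + φ (Tx)`. -/
def step (B : RectBMetric X s) (T : X → X) (φ : X → ℝ) (x : X) : ℝ :=
  B.d x (T x) + φ x + φ (T x)

lemma step_nonneg (H : Contr B T φ ψ ϕ F) (x : X) : 0 ≤ B.step T φ x := by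
  have := B.nonneg x (T x); have := H.hφ0 x; have := H.hφ0 (T x)
  unfold step; linarith

lemma step_le (H : Contr B T φ ψ ϕ F) (x : X) : B.step T φ (T x) ≤ B.step T φ x := by
  have hM : B.Mfun T φ x (T x) = max (B.step T φ x) (B.step T φ (T x)) := by
    simp [Mfun, step]
  by_contra! hlt
  have hpos := (step_nonneg H x).trans_lt hlt
  have := contr_lt H (x := x) (y := T x) (by rw [hM]; exact lt_max_of_lt_right hpos)
  rw [hM, max_eq_right hlt.le] at this
  have h2 := le_sq_mul H.hs B (T x) (T (T x))
  unfold step at this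
  linarith

lemma Mfun_step (H : Contr B T φ ψ ϕ F) (x : X) : B.Mfun T φ x (T x) = B.step T φ x := by
  have hM : B.Mfun T φ x (T x) = max (B.step T φ x) (B.step T φ (T x)) := by
    simp [Mfun, step]
  rw [hM, max_eq_left (step_le H x)]

lemma step_lt (H : Contr B T φ ψ ϕ F) {x : X} (hx : 0 < B.step T φ x) :
    B.step T φ (T x) < B.step T φ x := by
  have := contr_lt H (x := x) (y := T x) (by rw [Mfun_step H]; exact hx)
  rw [Mfun_step H] at this
  have h2 := le_sq_mul H.hs B (T x) (T (T x))
  unfold step at this ⊢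
  linarith

/-! ### Asymptotics along the orbit -/

variable {x : ℕ → X}

lemma step_antitone (H : Contr B T φ ψ ϕ F) (hx : ∀ n, x (n + 1) = T (x n)) :
    Antitone fun n => B.step T φ (x n) :=
  antitone_nat_of_succ_le fun n => by rw [hx]; exact step_le H _

lemma step_tendsto (H : Contr B T φ ψ ϕ F) (hx : ∀ n, x (n + 1) = T (x n)) :
    Tendsto (fun n => B.step T φ (x n)) atTop (𝓝 0) := by
  have ha := step_antitone H hx
  have hl := tendsto_atTop_ciInf ha
    ⟨0, by rintro _ ⟨n, rfl⟩; exact step_nonneg H _⟩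
  set L := ⨅ n, B.step T φ (x n)
  suffices L = 0 by rwa [this] at hl
  refine limit_eq_zero H.hψ H.hϕ H.hF (u := fun n => B.step T φ (x (n + 1)))
    (fun _ => step_nonneg H _) (fun _ => step_nonneg H _)
    (hl.comp (tendsto_add_atTop_nat 1)) hl fun n => ?_
  have h := H.contr (x n) (T (x n))
  rw [Mfun_step H] at h
  refine le_trans (H.hψ.2.1 (step_nonneg H _) (lhs_nonneg H _ _) ?_) h
  have h2 := le_sq_mul H.hs B (T (x n)) (T (T (x n)))
  rw [hx]; unfold step; linarith

lemma dist_le_step (H : Contr B T φ ψ ϕ F) (hx : ∀ n, x (n + 1) = T (x n)) (n : ℕ) :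
    B.d (x n) (x (n + 1)) ≤ B.step T φ (x n) := by
  have := H.hφ0 (x n); have := H.hφ0 (T (x n))
  rw [hx]; unfold step; linarith

lemma phi_le_step (H : Contr B T φ ψ ϕ F) (y : X) : φ y ≤ B.step T φ y := by
  have := B.nonneg y (T y); have := H.hφ0 (T y)
  unfold step; linarith

lemma phi_tendsto (H : Contr B T φ ψ ϕ F) (hx : ∀ n, x (n + 1) = T (x n)) :
    Tendsto (fun n => φ (x n)) atTop (𝓝 0) :=
  squeeze_zero (fun _ => H.hφ0 _) (fun _ => phi_le_step H _) (step_tendsto H hx)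

/-- When no step vanishes, steps strictly decrease, so the orbit never returns. -/
lemma orbit_injective (H : Contr B T φ ψ ϕ F) (hx : ∀ n, x (n + 1) = T (x n))
    (hpos : ∀ n, 0 < B.step T φ (x n)) : Function.Injective x := by
  have h : StrictAnti fun n => B.step T φ (x n) :=
    strictAnti_nat_of_succ_lt fun n => by rw [hx]; exact step_lt H (hpos n)
  exact fun m n hmn => h.injective (congrArg (B.step T φ) hmn)

/-- With `b n = d (x n) (x (n+2)) + φ (x n) + φ (x (n+2))`, the value `M (x n) (x (n+2))` is
`max (b n) (a n)`, which is antitone in `n`; a positive limit would have to come from `b`, where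
`limit_eq_zero` excludes it. -/
lemma dist_two_tendsto (H : Contr B T φ ψ ϕ F) (hx : ∀ n, x (n + 1) = T (x n)) :
    Tendsto (fun n => B.d (x n) (x (n + 2))) atTop (𝓝 0) := by
  have ha := step_antitone H hx
  set a : ℕ → ℝ := fun n => B.step T φ (x n) with ha_def
  let b : ℕ → ℝ := fun n => B.d (x n) (x (n + 2)) + φ (x n) + φ (x (n + 2))
  have hb0 : ∀ n, 0 ≤ b n := fun n => by
    have := B.nonneg (x n) (x (n + 2)); have := H.hφ0 (x n); have := H.hφ0 (x (n + 2))
    simp only [b]; linarith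
  let c : ℕ → ℝ := fun n => max (b n) (a n)
  have hc0 : ∀ n, 0 ≤ c n := fun n => le_max_of_le_left (hb0 n)
  have hM : ∀ n, B.Mfun T φ (x n) (x (n + 2)) = c n := fun n => by
    have h : max (a n) (a (n + 2)) = a n := max_eq_left (ha (by omega))
    simp only [c]
    rw [← h]
    rfl
  have hle : ∀ n, b (n + 1) ≤ s ^ 2 * B.d (T (x n)) (T (x (n + 2))) + φ (T (x n))
      + φ (T (x (n + 2))) := fun n => by
    have h := le_sq_mul H.hs B (x (n + 1)) (x (n + 3))
    rw [← hx, ← hx]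
    simp only [b]; linarith
  have hcb : ∀ n, ψ (b (n + 1)) ≤ F (ψ (c n)) (ϕ (c n)) := fun n => by
    rw [← hM]
    exact (H.hψ.2.1 (hb0 _) (lhs_nonneg H _ _) (hle n)).trans (H.contr _ _)
  have hbc : ∀ n, b (n + 1) ≤ c n := fun n => by
    rcases (hc0 n).eq_or_lt with h0 | h0
    · have h1 : ψ (c n) = 0 := (H.hψ.2.2.2 _ (hc0 n)).2 h0.symm
      have h2 := hcb n
      have h3 := H.hF.2.1 (ψ (c n)) (ϕ (c n)) h1.ge (by rw [← h0]; exact H.hϕ.2.2)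
      have h4 : ψ (b (n + 1)) = 0 := le_antisymm (by linarith) (H.hψ.2.2.1 _ (hb0 _))
      exact ((H.hψ.2.2.2 _ (hb0 _)).1 h4).le.trans h0.le
    · exact (lt_of_control H.hψ H.hϕ H.hF h0 (hcb n)).le
  have hc : Antitone c := antitone_nat_of_succ_le fun n =>
    max_le (hbc n) (le_max_of_le_right (ha n.le_succ))
  have hl := tendsto_atTop_ciInf hc ⟨0, by rintro _ ⟨n, rfl⟩; exact hc0 n⟩
  set L := ⨅ n, c n
  have hL : L = 0 := by
    by_contra hne
    have hLpos : 0 < L := lt_of_le_of_ne (ge_of_tendsto' hl hc0) (Ne.symm hne)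
    -- As `a → 0 < L`, the maximum defining `c` is eventually attained by `b`.
    have hev : ∀ᶠ n in atTop, c n = b n := by
      filter_upwards [(step_tendsto H hx).eventually_lt_const hLpos,
        Eventually.of_forall fun n => hc.le_of_tendsto hl n] with n h1 h2
      rcases max_choice (b n) (a n) with h | h
      · exact h
      · exact absurd (h2.trans_eq h) (not_le.2 h1)
    have hbl : Tendsto b atTop (𝓝 L) := hl.congr' hev
    exact hne (limit_eq_zero H.hψ H.hϕ H.hF (fun _ => hb0 _) hc0
      (hbl.comp (tendsto_add_atTop_nat 1)) hl hcb)
  rw [hL] at hl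
  refine squeeze_zero (fun _ => B.nonneg _ _) (fun n => ?_) hl
  refine le_trans ?_ (le_max_left (b n) (a n))
  have := H.hφ0 (x n); have := H.hφ0 (x (n + 2))
  simp only [b]; linarith

/-! ### The Cauchy property -/

/-- Failure of the Cauchy property at `ε` yields late pairs at which the distance crosses `ε`
in two steps; `dist_two_tendsto` is what keeps the pair nondegenerate (`i + 2 ≤ j`). -/
lemma exists_crossing (H : Contr B T φ ψ ϕ F) (hx : ∀ n, x (n + 1) = T (x n)) {ε : ℝ}
    (hε : 0 < ε) (h : ∀ N : ℕ, ∃ m ≥ N, ∃ n ≥ N, ε ≤ B.d (x m) (x n)) (k : ℕ) :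
    ∃ i j, k ≤ i ∧ i + 2 ≤ j ∧ ε ≤ B.d (x (j + 2)) (x (i + 1)) ∧ B.d (x j) (x (i + 1)) < ε := by
  obtain ⟨N, hN⟩ := eventually_atTop.1 (((step_tendsto H hx).eventually_lt_const hε).and
    ((dist_two_tendsto H hx).eventually_lt_const hε))
  have key : ∃ n, N + k + 1 ≤ n ∧ ∃ m, n < m ∧ ε ≤ B.d (x m) (x n) := by
    obtain ⟨m, hm, n, hn, hmn⟩ := h (N + k + 1)
    rcases lt_trichotomy m n with hlt | rfl | hlt
    · exact ⟨m, hm, n, hlt, by rwa [B.symm]⟩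
    · rw [B.self] at hmn; exact absurd hmn (not_le.2 hε)
    · exact ⟨n, hn, m, hlt, hmn⟩
  obtain ⟨n, hn, hex⟩ := key
  classical
  obtain ⟨hm1, hm2⟩ := Nat.find_spec hex
  have hmin : ∀ q < Nat.find hex, n < q → B.d (x q) (x n) < ε := fun q hq hnq => by
    by_contra! hc
    exact Nat.find_min hex hq ⟨hnq, hc⟩
  generalize Nat.find hex = m at hm1 hm2 hmin
  have h1 : m ≠ n + 1 := by
    rintro rfl
    rw [B.symm] at hm2
    exact absurd (hm2.trans (dist_le_step H hx n)) (not_le.2 (hN n (by omega)).1)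
  have h2 : m ≠ n + 2 := by
    rintro rfl
    rw [B.symm] at hm2
    exact absurd hm2 (not_le.2 (hN n (by omega)).2)
  obtain ⟨i, rfl⟩ : ∃ i, n = i + 1 := ⟨n - 1, by omega⟩
  obtain ⟨j, rfl⟩ : ∃ j, m = j + 2 := ⟨m - 2, by omega⟩
  exact ⟨i, j, by omega, by omega, hm2, hmin j (by omega) (by omega)⟩

/-- At a crossing, `M (x (j+1)) (x i)` lies between `s² ε` and `s ε + o(1) ≤ s² ε + o(1)`; the
factor `s²` in the contraction absorbs the loss in the rectangular inequality. -/
lemma orbit_cauchy (H : Contr B T φ ψ ϕ F) (hx : ∀ n, x (n + 1) = T (x n))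
    (hinj : Function.Injective x) : B.IsCauchySeq x := by
  by_contra hC
  simp only [IsCauchySeq, not_forall, not_exists, not_lt] at hC
  obtain ⟨ε, hε, hC⟩ := hC
  have hC' : ∀ N : ℕ, ∃ m ≥ N, ∃ n ≥ N, ε ≤ B.d (x m) (x n) := fun N => by
    obtain ⟨m, hm, n, hn, h⟩ := hC N
    exact ⟨m, hm, n, hn, h⟩
  choose i j hi hij hge hlt using exists_crossing H hx hε hC'
  have hs := H.hs
  have hs0 : 0 < s := by linarith
  let M : ℕ → ℝ := fun k => B.Mfun T φ (x (j k + 1)) (x (i k))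
  have hMpos : ∀ k, 0 < M k := fun k => by
    have hne : x (j k + 1) ≠ x (i k) := fun h => by
      have := hinj h; have := hij k; omega
    have := B.pos hne; have := H.hφ0 (x (j k + 1)); have := H.hφ0 (x (i k))
    exact lt_max_of_lt_left (by linarith)
  have hlhs : ∀ k, s ^ 2 * ε ≤ s ^ 2 * B.d (T (x (j k + 1))) (T (x (i k)))
      + φ (T (x (j k + 1))) + φ (T (x (i k))) := fun k => by
    have h1 := mul_le_mul_of_nonneg_left (hge k) (sq_nonneg s)
    have := H.hφ0 (x (j k + 2)); have := H.hφ0 (x (i k + 1))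
    rw [← hx, ← hx]; linarith
  have hlow : ∀ k, s ^ 2 * ε ≤ M k := fun k => (hlhs k).trans (contr_lt H (hMpos k)).le
  have hup : ∀ k, M k ≤ s ^ 2 * ε + (2 * s + 2) * B.step T φ (x k) := fun k => by
    have ha := step_antitone H hx
    have hak := step_nonneg H (x k)
    have hi1 : B.step T φ (x (i k)) ≤ B.step T φ (x k) := ha (hi k)
    have hj0 : B.step T φ (x (j k)) ≤ B.step T φ (x k) := ha (by have := hi k; have := hij k; omega)
    have hj1 : B.step T φ (x (j k + 1)) ≤ B.step T φ (x k) :=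
      ha (by have := hi k; have := hij k; omega)
    have hij := hij k
    have hrect := B.rect (x (j k + 1)) (x (i k)) (x (j k)) (x (i k + 1))
      (hinj.ne (by omega)) (hinj.ne (by omega)) (hinj.ne (by omega)) (hinj.ne (by omega))
      (hinj.ne (by omega))
    have h1 : B.d (x (j k + 1)) (x (j k)) ≤ B.step T φ (x k) := by
      rw [B.symm]; exact (dist_le_step H hx _).trans hj0
    have h2 : B.d (x (i k + 1)) (x (i k)) ≤ B.step T φ (x k) := by
      rw [B.symm]; exact (dist_le_step H hx _).trans hi1
    have h3 := mul_le_mul_of_nonneg_left (add_le_add (add_le_add h1 (hlt k).le) h2) hs0.le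
    have h4 := (phi_le_step H (x (j k + 1))).trans hj1
    have h5 := (phi_le_step H (x (i k))).trans hi1
    have h6 : s * ε ≤ s ^ 2 * ε := mul_le_mul_of_nonneg_right (by nlinarith) hε.le
    have h7 : 0 ≤ s ^ 2 * ε := by positivity
    have h8 : 0 ≤ s * B.step T φ (x k) := by positivity
    refine max_le (by linarith) (max_le ?_ ?_)
    · refine hj1.trans ?_; linarith
    · refine hi1.trans ?_; linarith
  have hMl : Tendsto M atTop (𝓝 (s ^ 2 * ε)) := by
    refine tendsto_of_tendsto_of_tendsto_of_le_of_le tendsto_const_nhds ?_ hlow hup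
    simpa using ((step_tendsto H hx).const_mul (2 * s + 2)).const_add (s ^ 2 * ε)
  have hz : s ^ 2 * ε = 0 := limit_eq_zero H.hψ H.hϕ H.hF (u := fun _ => s ^ 2 * ε)
    (fun _ => by positivity) (fun k => (hMpos k).le) tendsto_const_nhds hMl fun k =>
      (H.hψ.2.1 (by simp only [Set.mem_Ici]; positivity) (lhs_nonneg H _ _) (hlhs k)).trans
        (H.contr _ _)
  have : 0 < s ^ 2 * ε := by positivity
  linarith

/-! ### The fixed point -/

lemma limit_fixed (H : Contr B T φ ψ ϕ F) (hx : ∀ n, x (n + 1) = T (x n))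
    (hinj : Function.Injective x) (hφ : B.LSC φ) {z : X} (hz : B.TendstoSeq x z) : T z = z := by
  have hs0 : 0 < s := by linarith [H.hs]
  have hφz : φ z = 0 := le_antisymm ((hφ x z hz).trans_eq (phi_tendsto H hx).liminf_eq) (H.hφ0 z)
  by_contra hne
  have hd : 0 < B.d z (T z) := B.pos (Ne.symm hne)
  let D := B.d z (T z) + φ (T z)
  have hD : 0 < D := add_pos_of_pos_of_nonneg hd (H.hφ0 _)
  let M : ℕ → ℝ := fun n => B.Mfun T φ (x n) z
  let u : ℕ → ℝ := fun n => s ^ 2 * B.d (T (x n)) (T z) + φ (T (x n)) + φ (T z)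
  have hstep : B.step T φ z = D := by simp [step, D, hφz]
  have hMD : ∀ n, M n = max (B.d (x n) z + φ (x n) + φ z) (max (B.step T φ (x n)) D) :=
    fun n => by rw [← hstep]; rfl
  have hMl : Tendsto M atTop (𝓝 D) := by
    have h1 : Tendsto (fun n => B.d (x n) z + φ (x n) + φ z) atTop (𝓝 0) := by
      simpa [hφz] using (show Tendsto _ _ _ from hz).add (phi_tendsto H hx)
    have h2 := h1.max ((step_tendsto H hx).max (tendsto_const_nhds (x := D)))
    rw [max_eq_right hD.le, max_eq_right hD.le] at h2
    exact h2.congr fun n => (hMD n).symm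
  have huM : ∀ n, u n ≤ M n := fun n =>
    (contr_lt H (hD.trans_le (by
      change D ≤ M n
      rw [hMD]; exact le_max_of_le_right (le_max_right _ _)))).le
  -- Injectivity lets the orbit avoid `z` and `T z` from some index on.
  have hav : ∀ y, ∀ᶠ n in atTop, x n ≠ y := fun y => by
    have h := hinj.tendsto_cofinite.eventually
      (Set.finite_singleton y).eventually_cofinite_notMem
    rw [Nat.cofinite_eq_atTop] at h
    exact h
  have hlow : ∀ᶠ n in atTop, D - s * (B.d (x n) z + B.step T φ (x n)) ≤ u n := by
    filter_upwards [hav z, hav (T z), (tendsto_add_atTop_nat 1).eventually (hav z),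
      (tendsto_add_atTop_nat 1).eventually (hav (T z))] with n h1 h2 h3 h4
    have hr := B.rect z (T z) (x n) (x (n + 1)) (hinj.ne (by omega)) h1 h2 h3 h4
    rw [B.symm z (x n)] at hr
    have h5 := dist_le_step H hx n
    have h6 : B.d z (T z) ≤ s * (B.d (x n) z + B.step T φ (x n)) + s * B.d (x (n + 1)) (T z) := by
      linarith [mul_le_mul_of_nonneg_left h5 hs0.le]
    have h7 : s * B.d (x (n + 1)) (T z) ≤ s ^ 2 * B.d (x (n + 1)) (T z) :=
      mul_le_mul_of_nonneg_right (by nlinarith [H.hs]) (B.nonneg _ _)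
    have h8 := H.hφ0 (x (n + 1))
    simp only [u, D, ← hx]
    linarith
  have hul : Tendsto u atTop (𝓝 D) := by
    refine tendsto_of_tendsto_of_tendsto_of_le_of_le' ?_ hMl hlow (Eventually.of_forall huM)
    simpa using (((show Tendsto _ _ _ from hz).add (step_tendsto H hx)).const_mul s).const_sub D
  exact hD.ne' (limit_eq_zero H.hψ H.hϕ H.hF (fun _ => lhs_nonneg H _ _)
    (fun _ => B.Mfun_nonneg H.hφ0 _ _) hul hMl fun _ => H.contr _ _)

lemma exists_fixed [Nonempty X] (H : Contr B T φ ψ ϕ F) (hcomp : B.Complete) (hφ : B.LSC φ) :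
    ∃ z, T z = z := by
  obtain ⟨x₀⟩ := ‹Nonempty X›
  let x : ℕ → X := fun n => T^[n] x₀
  have hx : ∀ n, x (n + 1) = T (x n) := fun n => Function.iterate_succ_apply' T n x₀
  by_cases hpos : ∀ n, 0 < B.step T φ (x n)
  · have hinj := orbit_injective H hx hpos
    obtain ⟨z, hz⟩ := hcomp x (orbit_cauchy H hx hinj)
    exact ⟨z, limit_fixed H hx hinj hφ hz⟩
  · push Not at hpos
    obtain ⟨n, hn⟩ := hpos
    have h1 := dist_le_step H hx n
    refine ⟨x n, ?_⟩
    rw [← hx]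
    exact ((B.eq_iff _ _).1 (le_antisymm (h1.trans hn) (B.nonneg _ _))).symm

end RectBMetric


theorem stmt6 {X : Type*} [Nonempty X] {s : ℝ} (hs : 1 ≤ s) (B : RectBMetric X s)
    (hcomp : B.Complete) (T : X → X) (φ : X → ℝ) (hφ0 : ∀ x, 0 ≤ φ x)
    (hφ : B.LSC φ) (ψ ϕ : ℝ → ℝ) (F : ℝ → ℝ → ℝ)
    (hψ : AlteringDistance ψ) (hϕ : PhiU ϕ) (hF : CClass F)
    (hcontr : ∀ x y : X,
      ψ (s ^ 2 * B.d (T x) (T y) + φ (T x) + φ (T y)) ≤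
        F (ψ (B.Mfun T φ x y)) (ϕ (B.Mfun T φ x y))) :
    ∃ z : X, T z = z ∧ φ z = 0 ∧ ∀ w : X, T w = w → w = z := by
  have H : RectBMetric.Contr B T φ ψ ϕ F := ⟨hs, hφ0, hψ, hϕ, hF, hcontr⟩
  obtain ⟨z, hz⟩ := RectBMetric.exists_fixed H hcomp hφ
  exact ⟨z, hz, RectBMetric.phi_fixed H hz, fun w hw => RectBMetric.fixed_unique H hw hz⟩
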